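/- arXiv:2001.05785 — 2 statements merged into one kernel-verified Lean document; each statement's English description precedes it below -/
import Mathlib

section
/- Let S be a Polish metric space and let P be an asymptotically stable Markov-Feller operator on S with invariant probability measure μ*. If there exists at least one point z in the support of μ* at which P has the e-property in C_b(S), then P has the e-property in C_b(S) at every point of S. -/
open MeasureTheory ProbabilityTheory Filter Topology

/-- The `n`-step evolution of a measure under the Markov operator generated by the
transition kernel `κ`: `P⁰μ = μ`, `Pⁿ⁺¹μ = (Pⁿμ).bind κ`. -/
noncomputable def kIter {S : Type*} [MeasurableSpace S] (κ : ProbabilityTheory.Kernel S S) :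
    ℕ → Measure S → Measure S
  | 0, μ => μ
  | n + 1, μ => (kIter κ n μ).bind (fun x => κ x)

/-- The `n`-th iterate of the dual operator: `Uⁿf(x) = ∫ f d(Pⁿδₓ)`. -/
noncomputable def kDual {S : Type*} [MeasurableSpace S] (κ : ProbabilityTheory.Kernel S S)
    (n : ℕ) (f : S → ℝ) (x : S) : ℝ :=
  ∫ y, f y ∂(kIter κ n (Measure.dirac x))

/-- A real-valued function is bounded. -/
def IsBddFun {S : Type*} (f : S → ℝ) : Prop := ∃ C : ℝ, ∀ x, |f x| ≤ C

/-- The Feller property: the dual operator maps bounded continuous functions to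
continuous functions. -/
def IsFeller {S : Type*} [MeasurableSpace S] [TopologicalSpace S]
    (κ : ProbabilityTheory.Kernel S S) : Prop :=
  ∀ f : S → ℝ, Continuous f → IsBddFun f → Continuous (fun x => ∫ y, f y ∂(κ x))

/-- Asymptotic stability: `μst` is an invariant probability measure and `Pⁿμ → μst`
weakly for every Borel probability measure `μ`. -/
def IsAsympStable {S : Type*} [MeasurableSpace S] [TopologicalSpace S]
    (κ : ProbabilityTheory.Kernel S S) (μst : Measure S) : Prop :=
  IsProbabilityMeasure μst ∧ kIter κ 1 μst = μst ∧
    ∀ μ : Measure S, IsProbabilityMeasure μ → ∀ f : S → ℝ, Continuous f → IsBddFun f →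
      Tendsto (fun n => ∫ x, f x ∂(kIter κ n μ)) atTop (𝓝 (∫ x, f x ∂μst))

/-- The e-property in `C_b(S)` at a point `z`: for every bounded continuous `f`,
`sup_{n} |Uⁿf(x) − Uⁿf(z)| → 0` as `x → z`. -/
def EPropCbAt {S : Type*} [MeasurableSpace S] [TopologicalSpace S]
    (κ : ProbabilityTheory.Kernel S S) (z : S) : Prop :=
  ∀ f : S → ℝ, Continuous f → IsBddFun f →
    Tendsto (fun x => ⨆ n : ℕ, |kDual κ n f x - kDual κ n f z|) (𝓝 z) (𝓝 0)

/-!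
Let `V` be a neighbourhood of the good point `z` on which `|Uⁿf - c| ≤ b` for all late `n`, where
`c = ∫ f dμ⋆`, and let `0 ≤ χ ≤ 1` be continuous with `χ z = 0` and `χ = 1` off `V`. Call
`ψ ≥ 0` a late majorant if `|Uⁿf - c| ≤ b + ψ` everywhere for all late `n`. If `ψ` is one, then so
is `Uᵏ(χψ)` for every `k`, because the bound `b` takes over where `χ` is not `1`. By stability
`Uᵏ(χψ)` converges to the constant `∫ χψ dμ⋆`, hence `∫ χ Uᵏ(χψ) dμ⋆` converges to
`(∫ χ dμ⋆) (∫ χψ dμ⋆)`, where `∫ χ dμ⋆ < 1` since `z` lies in the support of `μ⋆`. Iterating makes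
`∫ χψ dμ⋆`, and then `Uᵏ(χψ) w`, arbitrarily small; as `Uᵏ(χψ)` is continuous, this bounds
`|Uⁿf - c|` on a neighbourhood of `w`, uniformly in late `n`.
-/

open scoped BoundedContinuousFunction Uniformity

section Equicontinuity

variable {X : Type*} [TopologicalSpace X] {x : X}

lemma tendsto_iSup_abs_sub_nhds_zero_iff_equicontinuousAt {ι : Type*} {F : ι → X → ℝ} {C : ℝ}
    (hF : ∀ i y, |F i y| ≤ C) :
    Tendsto (fun y => ⨆ i, |F i y - F i x|) (𝓝 x) (𝓝 0) ↔ EquicontinuousAt F x := by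
  have hbdd : ∀ y, BddAbove (Set.range fun i => |F i y - F i x|) := by
    refine fun y => ⟨C + C, ?_⟩
    rintro _ ⟨i, rfl⟩
    exact (abs_sub _ _).trans (add_le_add (hF i y) (hF i x))
  have hdist : ∀ y, dist (⨆ i, |F i y - F i x|) 0 = ⨆ i, |F i y - F i x| := fun y => by
    rw [Real.dist_0_eq_abs, abs_of_nonneg (Real.iSup_nonneg fun i => abs_nonneg _)]
  simp only [Metric.equicontinuousAt_iff_right, Metric.tendsto_nhds, hdist, dist_comm (F _ x),
    Real.dist_eq]
  refine ⟨fun h ε hε => ?_, fun h ε hε => ?_⟩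
  · filter_upwards [h ε hε] with y hy i using (le_ciSup (hbdd y) i).trans_lt hy
  · filter_upwards [h (ε / 2) (half_pos hε)] with y hy
    exact (Real.iSup_le (fun i => (hy i).le) (half_pos hε).le).trans_lt (half_lt_self hε)

lemma equicontinuousAt_iff_tendsto_cofinite_prod_nhds {ι α : Type*} [UniformSpace α]
    {F : ι → X → α} {c : α} (hcont : ∀ i, ContinuousAt (F i) x)
    (hlim : Tendsto (fun i => F i x) cofinite (𝓝 c)) :
    EquicontinuousAt F x ↔ Tendsto (fun p : ι × X => F p.1 p.2) (cofinite ×ˢ 𝓝 x) (𝓝 c) := by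
  have hlim' : Tendsto (fun p : ι × X => (c, F p.1 x)) (cofinite ×ˢ 𝓝 x) (𝓤 α) :=
    (Uniform.tendsto_nhds_right.1 hlim).comp tendsto_fst
  refine ⟨fun h => Uniform.tendsto_nhds_right.2 (hlim'.uniformity_trans fun U hU => ?_),
    fun h U hU => ?_⟩
  · exact ((h U hU).prod_inr cofinite).mono fun p hp => hp p.1
  · have hdiag : ∀ᶠ p in cofinite ×ˢ 𝓝 x, (F p.1 x, F p.1 p.2) ∈ U :=
      hlim'.uniformity_symm.uniformity_trans (Uniform.tendsto_nhds_right.1 h) hU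
    obtain ⟨P, hP, Q, hQ, hPQ⟩ := eventually_prod_iff.1 hdiag
    have hexceptional : ∀ᶠ y in 𝓝 x, ∀ i ∈ {i | ¬P i}, (F i x, F i y) ∈ U :=
      (eventually_cofinite.1 hP).eventually_all.2 fun i _ =>
        Uniform.tendsto_nhds_right.1 (hcont i) hU
    filter_upwards [hexceptional, hQ] with y hy hQy i
    by_cases hi : P i
    exacts [hPQ hi hQy, hy i hi]

end Equicontinuity

section Cutoff

variable {S : Type*} [TopologicalSpace S]

lemma exists_boundedContinuousFunction_cutoff [CompletelyRegularSpace S] {z : S} {V : Set S}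
    (hV : V ∈ 𝓝 z) :
    ∃ χ : S →ᵇ ℝ, 0 ≤ χ ∧ (∀ x, χ x ≤ 1) ∧ χ z = 0 ∧ ∀ x ∉ V, χ x = 1 := by
  obtain ⟨g, hg, hgz, hgV⟩ := CompletelyRegularSpace.completely_regular z (interior V)ᶜ
    isOpen_interior.isClosed_compl (Set.notMem_compl_iff.2 (mem_interior_iff_mem_nhds.2 hV))
  have hbound : ∀ x, ‖(g x : ℝ)‖ ≤ 1 := fun x => by
    rw [Real.norm_of_nonneg (g x).2.1]
    exact (g x).2.2
  refine ⟨.ofNormedAddCommGroup (fun x => (g x : ℝ)) (by fun_prop) 1 hbound,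
    fun x => (g x).2.1, fun x => (g x).2.2, congrArg Subtype.val hgz, fun x hx => ?_⟩
  exact congrArg Subtype.val (hgV fun hx' => hx (interior_subset hx'))

variable [MeasurableSpace S] [OpensMeasurableSpace S]

lemma integral_lt_one_of_mem_support {μ : Measure S} [IsProbabilityMeasure μ] {χ : S →ᵇ ℝ} {z : S}
    (hz : z ∈ μ.support) (hχ : ∀ x, χ x ≤ 1) (hχz : χ z < 1) : ∫ x, χ x ∂μ < 1 := by
  have hnhds : {x | χ x < 1} ∈ 𝓝 z := χ.continuous.continuousAt.eventually_lt_const hχz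
  have hsub : {x | χ x < 1} ⊆ Function.support fun x => 1 - χ x := fun x hx =>
    (sub_pos.2 hx).ne'
  have hpos : 0 < ∫ x, (1 - χ x) ∂μ := by
    rw [integral_pos_iff_support_of_nonneg (fun x => sub_nonneg.2 (hχ x))
      ((integrable_const 1).sub (χ.integrable μ))]
    exact (Measure.mem_support_iff_forall z).1 hz _ (mem_of_superset hnhds hsub)
  simpa [integral_sub (integrable_const 1) (χ.integrable μ)] using hpos

end Cutoff

section Iterates

variable {S : Type*} [MeasurableSpace S] {κ : Kernel S S}

lemma kIter_eq_pow_bind (κ : Kernel S S) (n : ℕ) (μ : Measure S) :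
    kIter κ n μ = μ.bind (κ ^ n) := by
  induction n with
  | zero => exact Measure.id_comp.symm
  | succ n ih => rw [kIter, ih, Measure.comp_assoc, pow_succ']; rfl

lemma kDual_eq_integral_pow (κ : Kernel S S) (n : ℕ) (f : S → ℝ) (x : S) :
    kDual κ n f x = ∫ y, f y ∂(κ ^ n) x := by
  rw [kDual, kIter_eq_pow_bind, Measure.dirac_bind (Kernel.measurable _)]

lemma kDual_add {m n : ℕ} {f : S → ℝ} {x : S} (hf : Integrable f ((κ ^ (m + n)) x)) :
    kDual κ (m + n) f x = kDual κ n (kDual κ m f) x := by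
  rw [Kernel.pow_add] at hf
  simp only [kDual_eq_integral_pow, Kernel.pow_add, Kernel.integral_comp hf]

instance isMarkovKernel_pow [IsMarkovKernel κ] (n : ℕ) : IsMarkovKernel (κ ^ n) := by
  induction n with
  | zero => exact inferInstanceAs (IsMarkovKernel Kernel.id)
  | succ n ih => exact inferInstanceAs (IsMarkovKernel ((κ ^ n) ∘ₖ κ))

end Iterates

section Feller

lemma isBddFun_coe {S : Type*} [TopologicalSpace S] (f : S →ᵇ ℝ) : IsBddFun f :=
  ⟨‖f‖, f.norm_coe_le_norm⟩

variable {S : Type*} [TopologicalSpace S] [MeasurableSpace S] {κ : Kernel S S}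

lemma ePropCbAt_iff_forall_boundedContinuousFunction {x : S} :
    EPropCbAt κ x ↔ ∀ f : S →ᵇ ℝ,
      Tendsto (fun y => ⨆ n, |kDual κ n f y - kDual κ n f x|) (𝓝 x) (𝓝 0) :=
  ⟨fun h f => h f f.continuous (isBddFun_coe f), fun h f hf ⟨C, hC⟩ =>
    h (.ofNormedAddCommGroup f hf C hC)⟩

lemma IsAsympStable.tendsto_kDual {μ : Measure S} (hstab : IsAsympStable κ μ) (f : S →ᵇ ℝ)
    (x : S) : Tendsto (fun n => kDual κ n f x) atTop (𝓝 (∫ y, f y ∂μ)) :=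
  hstab.2.2 (Measure.dirac x) inferInstance f f.continuous (isBddFun_coe f)

variable [OpensMeasurableSpace S] [IsMarkovKernel κ]

lemma abs_kDual_le_norm (n : ℕ) (f : S →ᵇ ℝ) (x : S) : |kDual κ n f x| ≤ ‖f‖ := by
  rw [kDual_eq_integral_pow]
  exact f.norm_integral_le_norm _

lemma IsFeller.continuous_kDual (hκ : IsFeller κ) (n : ℕ) (f : S →ᵇ ℝ) :
    Continuous (kDual κ n f) := by
  induction n with
  | zero =>
    convert f.continuous using 1
    exact funext fun x => integral_dirac' _ x f.continuous.stronglyMeasurable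
  | succ n ih =>
    convert hκ (kDual κ n f) ih ⟨‖f‖, abs_kDual_le_norm n f⟩ using 1
    funext x
    rw [kDual_add (f.integrable _), kDual_eq_integral_pow, pow_one]

/-- The dual iterate `Uⁿ` of a Feller operator as a self-map of `C_b(S)`. -/
noncomputable def IsFeller.dual (hκ : IsFeller κ) (n : ℕ) (f : S →ᵇ ℝ) : S →ᵇ ℝ :=
  .ofNormedAddCommGroup (kDual κ n f) (hκ.continuous_kDual n f) ‖f‖ (abs_kDual_le_norm n f)

lemma ePropCbAt_iff_tendsto_atTop_prod_nhds (hκ : IsFeller κ) {μ : Measure S}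
    (hstab : IsAsympStable κ μ) {x : S} :
    EPropCbAt κ x ↔ ∀ f : S →ᵇ ℝ,
      Tendsto (fun p : ℕ × S => kDual κ p.1 f p.2) (atTop ×ˢ 𝓝 x) (𝓝 (∫ y, f y ∂μ)) := by
  rw [ePropCbAt_iff_forall_boundedContinuousFunction]
  refine forall_congr' fun f => ?_
  have hlim := hstab.tendsto_kDual f x
  rw [← Nat.cofinite_eq_atTop] at hlim ⊢
  exact (tendsto_iSup_abs_sub_nhds_zero_iff_equicontinuousAt fun n => abs_kDual_le_norm n f).trans
    (equicontinuousAt_iff_tendsto_cofinite_prod_nhds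
      (fun n => (hκ.continuous_kDual n f).continuousAt) hlim)

end Feller

section Majorant

/-- `ψ` is a late majorant of the sequence `u` above the level `b` if `ψ ≥ 0` and, for all large
`n`, `u n ≤ b + ψ` everywhere. It is applied to `u n = |Uⁿf - c|`, where small late majorants give
convergence of `Uⁿf` to `c`. -/
def IsLateMajorant {S : Type*} (u : ℕ → S → ℝ) (b : ℝ) (ψ : S → ℝ) : Prop :=
  0 ≤ ψ ∧ ∀ᶠ n in atTop, ∀ y, u n y ≤ b + ψ y

lemma IsLateMajorant.mul_of_eventually_le {S : Type*} {u : ℕ → S → ℝ} {b : ℝ} {χ ψ : S → ℝ}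
    (hψ : IsLateMajorant u b ψ) (hχ : 0 ≤ χ) (hu : ∀ᶠ n in atTop, ∀ y, χ y ≠ 1 → u n y ≤ b) :
    IsLateMajorant u b (χ * ψ) := by
  have hχψ : 0 ≤ χ * ψ := mul_nonneg hχ hψ.1
  refine ⟨hχψ, ?_⟩
  filter_upwards [hψ.2, hu] with n hn hn' y
  by_cases hy : χ y = 1
  · simpa [hy] using hn y
  · exact (hn' y hy).trans (le_add_of_nonneg_right (hχψ y))

variable {S : Type*} [TopologicalSpace S] [MeasurableSpace S] [OpensMeasurableSpace S]
  {κ : Kernel S S} [IsMarkovKernel κ] {f : S →ᵇ ℝ} {b c : ℝ}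

lemma isLateMajorant_const (f : S →ᵇ ℝ) (c : ℝ) (hb : 0 ≤ b) :
    IsLateMajorant (fun n y => |kDual κ n f y - c|) b
      (BoundedContinuousFunction.const S (‖f‖ + |c|)) := by
  refine ⟨fun y => by simp only [BoundedContinuousFunction.const_apply]; positivity,
    .of_forall fun n y => ?_⟩
  calc |kDual κ n f y - c| ≤ |kDual κ n f y| + |c| := abs_sub _ _
    _ ≤ ‖f‖ + |c| := by gcongr; exact abs_kDual_le_norm n f y
    _ ≤ b + (‖f‖ + |c|) := le_add_of_nonneg_left hb

lemma IsLateMajorant.dual (hκ : IsFeller κ) {ψ : S →ᵇ ℝ}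
    (hψ : IsLateMajorant (fun n y => |kDual κ n f y - c|) b ψ) (k : ℕ) :
    IsLateMajorant (fun n y => |kDual κ n f y - c|) b (hκ.dual k ψ) := by
  refine ⟨fun y => integral_nonneg hψ.1, ?_⟩
  obtain ⟨N, hN⟩ := eventually_atTop.1 hψ.2
  filter_upwards [eventually_ge_atTop (N + k)] with n hn y
  obtain ⟨m, rfl⟩ := Nat.exists_eq_add_of_le hn
  have hU : Integrable (hκ.dual (N + m) f) ((κ ^ k) y) := (hκ.dual (N + m) f).integrable _
  calc |kDual κ (N + k + m) f y - c|
      = |∫ v, (hκ.dual (N + m) f v - c) ∂(κ ^ k) y| := by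
        rw [add_right_comm, kDual_add (f.integrable _), kDual_eq_integral_pow,
          integral_sub hU (integrable_const c)]
        simp [IsFeller.dual]
    _ ≤ ∫ v, |hκ.dual (N + m) f v - c| ∂(κ ^ k) y := abs_integral_le_integral_abs
    _ ≤ ∫ v, (b + ψ v) ∂(κ ^ k) y :=
        integral_mono (hU.sub (integrable_const c)).abs
          ((integrable_const b).add (ψ.integrable _)) (hN (N + m) (Nat.le_add_right N m))
    _ = b + hκ.dual k ψ y := by
        rw [integral_add (integrable_const b) (ψ.integrable _)]
        simp [IsFeller.dual, kDual_eq_integral_pow]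

end Majorant

section Propagation

variable {S : Type*} [TopologicalSpace S] [MeasurableSpace S] [OpensMeasurableSpace S]
  {κ : Kernel S S} [IsMarkovKernel κ] {μ : Measure S} {f : S →ᵇ ℝ} {b c : ℝ}

lemma IsAsympStable.tendsto_integral_mul_dual (hstab : IsAsympStable κ μ) (hκ : IsFeller κ)
    (χ φ : S →ᵇ ℝ) :
    Tendsto (fun k => ∫ x, χ x * hκ.dual k φ x ∂μ) atTop
      (𝓝 ((∫ x, χ x ∂μ) * ∫ x, φ x ∂μ)) := by
  have := hstab.1
  rw [← integral_mul_const]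
  refine tendsto_integral_of_dominated_convergence (fun _ => ‖χ‖ * ‖φ‖)
    (fun k => (χ * hκ.dual k φ).continuous.aestronglyMeasurable) (integrable_const _)
    (fun k => .of_forall fun x => ?_)
    (.of_forall fun x => (hstab.tendsto_kDual φ x).const_mul (χ x))
  rw [norm_mul]
  exact mul_le_mul (χ.norm_coe_le_norm x) (abs_kDual_le_norm k φ x) (norm_nonneg _) (norm_nonneg _)

lemma IsLateMajorant.exists_integral_mul_lt (hκ : IsFeller κ) (hstab : IsAsympStable κ μ)
    {χ ψ : S →ᵇ ℝ} (hψ : IsLateMajorant (fun n y => |kDual κ n f y - c|) b ψ) (hχ : 0 ≤ χ)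
    (hlate : ∀ᶠ n in atTop, ∀ y, χ y ≠ 1 → |kDual κ n f y - c| ≤ b) {t : ℝ}
    (ht : (∫ x, χ x ∂μ) * ∫ x, (χ * ψ) x ∂μ < t) :
    ∃ φ : S →ᵇ ℝ, IsLateMajorant (fun n y => |kDual κ n f y - c|) b φ ∧
      ∫ x, χ x * φ x ∂μ < t := by
  obtain ⟨k, hk⟩ :=
    ((hstab.tendsto_integral_mul_dual hκ χ (χ * ψ)).eventually_lt_const ht).exists
  exact ⟨_, (hψ.mul_of_eventually_le hχ hlate).dual hκ k, hk⟩

lemma exists_isLateMajorant_integral_mul_lt (hκ : IsFeller κ) (hstab : IsAsympStable κ μ)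
    (hb : 0 ≤ b) {χ : S →ᵇ ℝ} (hχ : 0 ≤ χ) (hχμ : ∫ x, χ x ∂μ < 1)
    (hlate : ∀ᶠ n in atTop, ∀ y, χ y ≠ 1 → |kDual κ n f y - c| ≤ b) {η : ℝ} (hη : 0 < η) :
    ∃ ψ : S →ᵇ ℝ, IsLateMajorant (fun n y => |kDual κ n f y - c|) b ψ ∧
      ∫ x, χ x * ψ x ∂μ < η := by
  obtain ⟨r, hχr, hr⟩ := exists_between hχμ
  have hr0 : 0 < r := (integral_nonneg hχ).trans_lt hχr
  obtain ⟨A, hA⟩ := exists_gt (‖f‖ + |c|)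
  have hA0 : 0 < A := lt_of_le_of_lt (by positivity) hA
  have hdecay (i : ℕ) : ∃ ψ : S →ᵇ ℝ, IsLateMajorant (fun n y => |kDual κ n f y - c|) b ψ ∧
      ∫ x, χ x * ψ x ∂μ < r ^ i * A := by
    induction i with
    | zero =>
      refine ⟨_, isLateMajorant_const f c hb, ?_⟩
      have hle : (∫ x, χ x ∂μ) * (‖f‖ + |c|) ≤ 1 * (‖f‖ + |c|) := by gcongr
      simp only [BoundedContinuousFunction.const_apply, integral_mul_const]
      linarith
    | succ i ih =>
      obtain ⟨ψ, hψ, hψi⟩ := ih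
      have hlt : (∫ x, χ x ∂μ) * ∫ x, (χ * ψ) x ∂μ < r ^ (i + 1) * A :=
        calc (∫ x, χ x ∂μ) * ∫ x, (χ * ψ) x ∂μ
            ≤ r * ∫ x, (χ * ψ) x ∂μ :=
              mul_le_mul_of_nonneg_right hχr.le
                (integral_nonneg fun x => mul_nonneg (hχ x) (hψ.1 x))
          _ < r * (r ^ i * A) := mul_lt_mul_of_pos_left hψi hr0
          _ = r ^ (i + 1) * A := by ring
      exact hψ.exists_integral_mul_lt hκ hstab hχ hlate hlt
  obtain ⟨i, hi⟩ := exists_pow_lt_of_lt_one (div_pos hη hA0) hr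
  obtain ⟨ψ, hψ, hψi⟩ := hdecay i
  exact ⟨ψ, hψ, hψi.trans ((lt_div_iff₀ hA0).1 hi)⟩

lemma exists_isLateMajorant_apply_lt (hκ : IsFeller κ) (hstab : IsAsympStable κ μ)
    (hb : 0 ≤ b) {χ : S →ᵇ ℝ} (hχ : 0 ≤ χ) (hχμ : ∫ x, χ x ∂μ < 1)
    (hlate : ∀ᶠ n in atTop, ∀ y, χ y ≠ 1 → |kDual κ n f y - c| ≤ b) (w : S)
    {η : ℝ} (hη : 0 < η) :
    ∃ ψ : S →ᵇ ℝ, IsLateMajorant (fun n y => |kDual κ n f y - c|) b ψ ∧ ψ w < η := by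
  obtain ⟨ψ, hψ, hψη⟩ := exists_isLateMajorant_integral_mul_lt hκ hstab hb hχ hχμ hlate hη
  obtain ⟨k, hk⟩ := ((hstab.tendsto_kDual (χ * ψ) w).eventually_lt_const hψη).exists
  exact ⟨_, (hψ.mul_of_eventually_le hχ hlate).dual hκ k, hk⟩

variable [CompletelyRegularSpace S]

theorem tendsto_kDual_prod_nhds_of_mem_support (hκ : IsFeller κ) (hstab : IsAsympStable κ μ)
    {z : S} (hz : z ∈ μ.support)
    (h : Tendsto (fun p : ℕ × S => kDual κ p.1 f p.2) (atTop ×ˢ 𝓝 z) (𝓝 c)) (w : S) :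
    Tendsto (fun p : ℕ × S => kDual κ p.1 f p.2) (atTop ×ˢ 𝓝 w) (𝓝 c) := by
  have := hstab.1
  refine Metric.tendsto_nhds.2 fun ε hε => ?_
  obtain ⟨P, hP, V, hV, hPV⟩ := eventually_prod_iff.1 (Metric.tendsto_nhds.1 h _ (half_pos hε))
  obtain ⟨χ, hχ, hχ1, hχz, hχV⟩ := exists_boundedContinuousFunction_cutoff hV
  have hχμ : ∫ x, χ x ∂μ < 1 := integral_lt_one_of_mem_support hz hχ1 (hχz ▸ zero_lt_one)
  have hlate : ∀ᶠ n in atTop, ∀ y, χ y ≠ 1 → |kDual κ n f y - c| ≤ ε / 2 :=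
    hP.mono fun n hn y hy => (hPV hn (not_not.1 (mt (hχV y) hy))).le
  obtain ⟨ψ, hψ, hψw⟩ :=
    exists_isLateMajorant_apply_lt hκ hstab (half_pos hε).le hχ hχμ hlate w (half_pos hε)
  have hψnhds : ∀ᶠ y in 𝓝 w, ψ y < ε / 2 := ψ.continuous.continuousAt.eventually_lt_const hψw
  refine (hψ.2.prod_mk hψnhds).mono fun p hp => ?_
  calc |kDual κ p.1 f p.2 - c| ≤ ε / 2 + ψ p.2 := hp.1 p.2
    _ < ε / 2 + ε / 2 := by gcongr; exact hp.2
    _ = ε := add_halves ε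

end Propagation

theorem eProp_everywhere_of_eProp_at_support_point_general
    {S : Type*} [TopologicalSpace S] [CompletelyRegularSpace S]
    [MeasurableSpace S] [OpensMeasurableSpace S] {κ : Kernel S S} [IsMarkovKernel κ]
    (hFeller : IsFeller κ) {μ : Measure S} (hstab : IsAsympStable κ μ)
    {z : S} (hz : z ∈ μ.support) (hEz : EPropCbAt κ z) (w : S) : EPropCbAt κ w := by
  rw [ePropCbAt_iff_tendsto_atTop_prod_nhds hFeller hstab] at hEz ⊢
  exact fun f => tendsto_kDual_prod_nhds_of_mem_support hFeller hstab hz (hEz f) w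

/-- If an asymptotically stable Markov–Feller operator on a Polish metric space has the
e-property in `C_b(S)` at some point of the support of its invariant measure, then it has the
e-property in `C_b(S)` at every point of `S`. -/
theorem eProp_everywhere_of_eProp_at_support_point
    {S : Type*} [MetricSpace S] [CompleteSpace S] [SecondCountableTopology S]
    [MeasurableSpace S] [BorelSpace S]
    (κ : ProbabilityTheory.Kernel S S) [IsMarkovKernel κ]
    (hFeller : IsFeller κ) (μst : Measure S) (hstab : IsAsympStable κ μst)
    (z : S) (hz : ∀ ε > 0, 0 < μst (Metric.ball z ε)) (hEz : EPropCbAt κ z) :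
    ∀ w : S, EPropCbAt κ w :=
  eProp_everywhere_of_eProp_at_support_point_general hFeller hstab
    (Metric.nhds_basis_ball.mem_measureSupport.2 hz) hEz
end

section
/- Let S be a Polish metric space and let P be a regular Markov operator on S which is asymptotically stable and has the e-property in L_FM(S) at a point z ∈ S. Then P also has the e-property in C_b(S) at z, i.e., for every bounded continuous f : S → ℝ, lim_{x→z} sup_{n∈ℕ} |Uⁿf(x) − Uⁿf(z)| = 0. -/
open MeasureTheory ProbabilityTheory Filter Topology

/-- The e-property in `L_FM(S)` (1-Lipschitz functions with values in `[0,1]`) at a point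
`z`: for every such `f`, `sup_{n} |Uⁿf(x) − Uⁿf(z)| → 0` as `x → z`. -/
def EPropFMAt {S : Type*} [MeasurableSpace S] [PseudoMetricSpace S]
    (κ : ProbabilityTheory.Kernel S S) (z : S) : Prop :=
  ∀ f : S → ℝ, LipschitzWith 1 f → (∀ x, f x ∈ Set.Icc (0 : ℝ) 1) →
    Tendsto (fun x => ⨆ n : ℕ, |kDual κ n f x - kDual κ n f z|) (𝓝 z) (𝓝 0)

/-!
Weak convergence of probability measures can be tested on `1`-Lipschitz functions with values in
`[0, 1]`, so it suffices to phrase the e-property in terms of convergence of integrals. If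
`Uⁿf(z) → a`, then `(Uⁿf)ₙ` is equicontinuous at `z` if and only if every `Uⁿf` is continuous at `z`
and `Uⁿf(x) → a` as `(n, x) → (∞, z)` jointly. For all `f` at once, with `a = ∫ f dμ*`, this means
that `Pⁿδₓ` converges weakly to `Pⁿδ_z` as `x → z` for fixed `n`, and to `μ*` jointly, whether `f`
ranges over `L_FM(S)` or over `C_b(S)`.
-/

section Equicontinuity

variable {ι X : Type*} [TopologicalSpace X] {z : X}

theorem tendsto_iSup_abs_sub_iff_equicontinuousAt {F : ι → X → ℝ}
    (hF : ∀ x, BddAbove (Set.range fun i => |F i x - F i z|)) :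
    Tendsto (fun x => ⨆ i, |F i x - F i z|) (𝓝 z) (𝓝 0) ↔ EquicontinuousAt F z := by
  have hnonneg (x : X) : 0 ≤ ⨆ i, |F i x - F i z| := Real.iSup_nonneg fun _ => abs_nonneg _
  simp only [Metric.tendsto_nhds, Metric.equicontinuousAt_iff_right, dist_comm (F _ z),
    Real.dist_eq, sub_zero, abs_of_nonneg (hnonneg _)]
  refine ⟨fun h ε hε => ?_, fun h ε hε => ?_⟩
  · filter_upwards [h ε hε] with x hx i using (le_ciSup (hF x) i).trans_lt hx
  · filter_upwards [h (ε / 2) (half_pos hε)] with x hx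
    exact (Real.iSup_le (fun i => (hx i).le) (half_pos hε).le).trans_lt (half_lt_self hε)

variable {α : Type*} [UniformSpace α] {F : ι → X → α} {a : α}

theorem tendsto_uncurry_of_equicontinuousAt {l : Filter ι} (hF : EquicontinuousAt F z)
    (hz : Tendsto (fun i => F i z) l (𝓝 a)) :
    Tendsto (Function.uncurry F) (l ×ˢ 𝓝 z) (𝓝 a) :=
  (hz.comp tendsto_fst).congr_uniformity fun U hU =>
    (tendsto_snd.eventually (hF U hU)).mono fun p hp => hp p.1

theorem equicontinuousAt_of_tendsto_uncurry_cofinite (hcont : ∀ i, ContinuousAt (F i) z)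
    (hlim : Tendsto (Function.uncurry F) (cofinite ×ˢ 𝓝 z) (𝓝 a)) :
    EquicontinuousAt F z := by
  intro U hU
  obtain ⟨V, hV, _, hVU⟩ := comp_symm_mem_uniformity_sets hU
  obtain ⟨A, hA, B, hB, hAB⟩ :=
    eventually_prod_iff.1 (hlim.eventually (UniformSpace.ball_mem_nhds a hV))
  have hexceptional : ∀ᶠ x in 𝓝 z, ∀ i ∈ {i | ¬A i}, (F i z, F i x) ∈ U :=
    (eventually_all_finite (eventually_cofinite.1 hA)).2 fun i _ =>
      hcont i (UniformSpace.ball_mem_nhds (F i z) hU)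
  filter_upwards [hB, hexceptional] with x hx hx_exceptional i
  by_cases hi : A i
  · exact hVU ⟨a, SetRel.symm V (hAB hi hB.self_of_nhds), hAB hi hx⟩
  · exact hx_exceptional i hi

end Equicontinuity

section LipschitzTestFunctions

variable {S : Type*} [PseudoMetricSpace S]

theorem exists_lipschitzWith_one_mem_Icc_eq_mul_add [Nonempty S] {g : S → ℝ} {C : ℝ} {L : NNReal}
    (hC : ∀ x y, dist (g x) (g y) ≤ C) (hL : LipschitzWith L g) :
    ∃ φ : S → ℝ, LipschitzWith 1 φ ∧ (∀ x, φ x ∈ Set.Icc (0 : ℝ) 1) ∧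
      ∃ a b : ℝ, ∀ x, g x = a * φ x + b := by
  obtain ⟨x₀⟩ := ‹Nonempty S›
  obtain ⟨M, hCM, hLM, hM0⟩ : ∃ M : ℝ, 2 * C ≤ M ∧ L ≤ M ∧ 0 < M :=
    ⟨max (2 * C) (max L 1), by simp, by simp, by simp⟩
  refine ⟨fun x => (g x - g x₀ + C) / M, LipschitzWith.of_dist_le_mul fun x y => ?_, fun x => ?_,
    M, g x₀ - C, fun x => ?_⟩
  · calc dist ((g x - g x₀ + C) / M) ((g y - g x₀ + C) / M)
        = dist (g x) (g y) / M := by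
          rw [Real.dist_eq, Real.dist_eq, ← sub_div, abs_div, abs_of_pos hM0]
          ring_nf
      _ ≤ L * dist x y / M := by gcongr; exact hL.dist_le_mul x y
      _ ≤ M * dist x y / M := by gcongr
      _ = (1 : NNReal) * dist x y := by simp [hM0.ne']
  · have hx := abs_le.1 (hC x x₀)
    exact ⟨div_nonneg (by linarith) hM0.le, (div_le_one hM0).2 (by linarith)⟩
  · field_simp
    ring

variable [MeasurableSpace S] [OpensMeasurableSpace S]

theorem tendsto_integral_of_forall_lipschitzWith_one {ι : Type*} {l : Filter ι}
    [l.IsCountablyGenerated] {μs : ι → Measure S} [∀ i, IsProbabilityMeasure (μs i)]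
    {μ : Measure S} [IsProbabilityMeasure μ]
    (h : ∀ g : S → ℝ, LipschitzWith 1 g → (∀ x, g x ∈ Set.Icc (0 : ℝ) 1) →
      Tendsto (fun i => ∫ x, g x ∂μs i) l (𝓝 (∫ x, g x ∂μ)))
    {f : S → ℝ} (hf : Continuous f) (hfb : IsBddFun f) :
    Tendsto (fun i => ∫ x, f x ∂μs i) l (𝓝 (∫ x, f x ∂μ)) := by
  let νs : ι → ProbabilityMeasure S := fun i => ⟨μs i, inferInstance⟩
  let ν : ProbabilityMeasure S := ⟨μ, inferInstance⟩
  have hν : Tendsto νs l (𝓝 ν) := by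
    refine tendsto_iff_forall_lipschitz_integral_tendsto.2 ?_
    rintro g ⟨C, hC⟩ ⟨L, hL⟩
    have : Nonempty S := nonempty_of_isProbabilityMeasure μ
    obtain ⟨φ, hφ, hφ01, a, b, hg⟩ := exists_lipschitzWith_one_mem_Icc_eq_mul_add hC hL
    have hint (ρ : Measure S) [IsProbabilityMeasure ρ] : ∫ x, g x ∂ρ = a * ∫ x, φ x ∂ρ + b := by
      have hφint : Integrable φ ρ :=
        Integrable.of_mem_Icc 0 1 hφ.continuous.measurable.aemeasurable (ae_of_all _ hφ01)
      simp only [hg, integral_add (hφint.const_mul a) (integrable_const b), integral_const_mul,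
        integral_const, probReal_univ, one_smul]
    simp only [hint]
    exact ((h φ hφ hφ01).const_mul a).add_const b
  obtain ⟨C, hC⟩ := hfb
  exact ProbabilityMeasure.tendsto_iff_forall_integral_tendsto.1 hν
    (BoundedContinuousFunction.ofNormedAddCommGroup f hf C hC)

end LipschitzTestFunctions

section MarkovOperator

theorem isBddFun_of_mem_Icc {S : Type*} {f : S → ℝ} {a b : ℝ} (hf : ∀ x, f x ∈ Set.Icc a b) :
    IsBddFun f :=
  ⟨max |a| |b|, fun x => abs_le_max_abs_abs (hf x).1 (hf x).2⟩

variable {S : Type*} [MeasurableSpace S] (κ : Kernel S S) [IsMarkovKernel κ]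

instance isProbabilityMeasure_kIter (n : ℕ) (μ : Measure S) [hμ : IsProbabilityMeasure μ] :
    IsProbabilityMeasure (kIter κ n μ) := by
  induction n with
  | zero => exact hμ
  | succ n ih => exact inferInstanceAs (IsProbabilityMeasure (κ ∘ₘ kIter κ n μ))

theorem abs_kDual_le {f : S → ℝ} {C : ℝ} (hC : ∀ x, |f x| ≤ C) (n : ℕ) (x : S) :
    |kDual κ n f x| ≤ C := by
  simpa [kDual] using norm_integral_le_of_norm_le_const
    (μ := kIter κ n (Measure.dirac x)) (f := f) (ae_of_all _ hC)

theorem bddAbove_range_abs_kDual_sub {f : S → ℝ} (hf : IsBddFun f) (x z : S) :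
    BddAbove (Set.range fun n : ℕ => |kDual κ n f x - kDual κ n f z|) := by
  obtain ⟨C, hC⟩ := hf
  refine ⟨C + C, Set.forall_mem_range.2 fun n => ?_⟩
  exact (abs_sub _ _).trans (add_le_add (abs_kDual_le κ hC n x) (abs_kDual_le κ hC n z))

theorem tendsto_iSup_abs_kDual_sub_iff_equicontinuousAt [TopologicalSpace S] {f : S → ℝ}
    (hf : IsBddFun f) {z : S} :
    Tendsto (fun x => ⨆ n : ℕ, |kDual κ n f x - kDual κ n f z|) (𝓝 z) (𝓝 0) ↔
      EquicontinuousAt (fun n => kDual κ n f) z :=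
  tendsto_iSup_abs_sub_iff_equicontinuousAt fun x => bddAbove_range_abs_kDual_sub κ hf x z

theorem ePropCb_of_ePropFM_of_asympStable_general [PseudoMetricSpace S] [OpensMeasurableSpace S]
    (ν : Measure S) [IsProbabilityMeasure ν] (z : S)
    (hν : ∀ g : S → ℝ, LipschitzWith 1 g → (∀ x, g x ∈ Set.Icc (0 : ℝ) 1) →
      Tendsto (fun n => kDual κ n g z) atTop (𝓝 (∫ x, g x ∂ν)))
    (hEz : EPropFMAt κ z) (f : S → ℝ) (hf : Continuous f) (hfb : IsBddFun f) :
    Tendsto (fun x => ⨆ n : ℕ, |kDual κ n f x - kDual κ n f z|) (𝓝 z) (𝓝 0) := by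
  have hequi (g : S → ℝ) (hg : LipschitzWith 1 g) (hg01 : ∀ x, g x ∈ Set.Icc (0 : ℝ) 1) :
      EquicontinuousAt (fun n => kDual κ n g) z :=
    (tendsto_iSup_abs_kDual_sub_iff_equicontinuousAt κ (isBddFun_of_mem_Icc hg01)).1
      (hEz g hg hg01)
  have hcont (n : ℕ) : ContinuousAt (kDual κ n f) z :=
    tendsto_integral_of_forall_lipschitzWith_one
      (fun g hg hg01 => (hequi g hg hg01).continuousAt n) hf hfb
  have hjoint : Tendsto (Function.uncurry fun n => kDual κ n f) (atTop ×ˢ 𝓝 z)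
      (𝓝 (∫ x, f x ∂ν)) :=
    tendsto_integral_of_forall_lipschitzWith_one
      (fun g hg hg01 => tendsto_uncurry_of_equicontinuousAt (hequi g hg hg01) (hν g hg hg01)) hf hfb
  rw [← Nat.cofinite_eq_atTop] at hjoint
  exact (tendsto_iSup_abs_kDual_sub_iff_equicontinuousAt κ hfb).2
    (equicontinuousAt_of_tendsto_uncurry_cofinite hcont hjoint)

end MarkovOperator

/-- A regular Markov operator on a Polish metric space which is asymptotically stable and has
the e-property in `L_FM(S)` at `z` also has the e-property in `C_b(S)` at `z`. -/
theorem ePropCb_of_ePropFM_of_asympStable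
    {S : Type*} [MetricSpace S] [CompleteSpace S] [SecondCountableTopology S]
    [MeasurableSpace S] [BorelSpace S]
    (κ : ProbabilityTheory.Kernel S S) [IsMarkovKernel κ]
    (μst : Measure S) (hstab : IsAsympStable κ μst)
    (z : S) (hEz : EPropFMAt κ z) :
    ∀ f : S → ℝ, Continuous f → IsBddFun f →
      Tendsto (fun x => ⨆ n : ℕ, |kDual κ n f x - kDual κ n f z|) (𝓝 z) (𝓝 0) := by
  obtain ⟨_, -, hconv⟩ := hstab
  exact ePropCb_of_ePropFM_of_asympStable_general κ μst z (fun g hg hg01 =>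
    hconv (Measure.dirac z) inferInstance g hg.continuous (isBddFun_of_mem_Icc hg01)) hEz
end
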